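/- arXiv:1509.02424 — 2 statements merged into one kernel-verified Lean document; each statement's English description precedes it below -/
import Mathlib

section
/- Let P be a partial profile over a finite set A of alternatives, B a partial agenda over A, and p ∈ A. There exist a completion P* of P and a completion L of B such that p is not a (Succ_L(p) ∪ {p})-majority winner in P* if and only if there exists a completion P* of P in which p is not an (A ∖ Prec_B(p))-majority winner. -/
open scoped Classical

/-- The number of voters in profile `prof` who strictly prefer `b` to `c`. -/
noncomputable def prefCount {α : Type*} {n : ℕ} (prof : Fin n → α → α → Prop) (b c : α) : ℕ :=
  (Finset.univ.filter fun i => prof i b c).card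

/-- Alternative `b` beats alternative `c`: more than `n/2` voters prefer `b` to `c`. -/
def Beats {α : Type*} {n : ℕ} (prof : Fin n → α → α → Prop) (b c : α) : Prop :=
  2 * prefCount prof b c > n

/-- `a` is an `S`-majority winner: more than `n/2` voters prefer `a`
to every alternative of `S \ {a}`. -/
def IsMajWinner {α : Type*} {n : ℕ} (prof : Fin n → α → α → Prop) (S : Finset α) (a : α) :
    Prop :=
  2 * (Finset.univ.filter fun i => ∀ c ∈ S, c ≠ a → prof i a c).card > n

/-- The successive winner for the agenda given as a list: the first alternative of the
agenda that is a majority winner with respect to itself and all later alternatives. -/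
noncomputable def succWinner {α : Type*} [DecidableEq α] {n : ℕ}
    (prof : Fin n → α → α → Prop) : List α → Option α
  | [] => none
  | a :: rest =>
    if IsMajWinner prof ((a :: rest).toFinset) a then some a
    else succWinner prof rest

/-- The amendment winner for the agenda given as a list: the current round winner is
challenged by the next alternative on the agenda, which takes over if it beats it. -/
noncomputable def amendWinner {α : Type*} {n : ℕ}
    (prof : Fin n → α → α → Prop) : List α → Option α
  | [] => none
  | a :: rest => some (rest.foldl (fun win c => if Beats prof c win then c else win) a)

/-- `comp` is a completion of the partial profile `prof`: every voter's strict partial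
order is replaced by a linear (strict total) order extending it. -/
def Completes {α : Type*} {n : ℕ} (comp prof : Fin n → α → α → Prop) : Prop :=
  ∀ i, IsStrictTotalOrder α (comp i) ∧ ∀ x y, prof i x y → comp i x y

/-- `L` is a completion of the partial agenda `B`: `L` is an agenda (a linear order on all
alternatives, given as a duplicate-free exhaustive list) extending `B`. -/
def AgendaCompletes {α : Type*} [DecidableEq α] (L : List α) (B : α → α → Prop) : Prop :=
  L.Nodup ∧ (∀ a : α, a ∈ L) ∧ ∀ x y, B x y → L.idxOf x < L.idxOf y

/-- `Prec L p`: the set of alternatives ordered before `p` by the agenda `L`. -/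
noncomputable def PrecL {α : Type*} [Fintype α] [DecidableEq α] (L : List α) (p : α) :
    Finset α :=
  Finset.univ.filter fun c => L.idxOf c < L.idxOf p

/-- `Succ L p`: the set of alternatives ordered after `p` by the agenda `L`. -/
noncomputable def SuccL {α : Type*} [Fintype α] [DecidableEq α] (L : List α) (p : α) :
    Finset α :=
  Finset.univ.filter fun c => L.idxOf p < L.idxOf c

/-- `Prec B p` for a partial agenda `B` (a strict partial order on the alternatives):
the set of alternatives ordered before `p` by `B`. -/
noncomputable def PrecB {α : Type*} [Fintype α] (B : α → α → Prop) (p : α) : Finset α :=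
  Finset.univ.filter fun c => B c p

/-- `Succ B p` for a partial agenda `B`: the set of alternatives ordered after `p`. -/
noncomputable def SuccB {α : Type*} [Fintype α] (B : α → α → Prop) (p : α) : Finset α :=
  Finset.univ.filter fun c => B p c

/-!
For every completion `L` of `B`, the set `Succ_L(p) ∪ {p}` is contained in `A ∖ Prec_B(p)`, and some
`L` attains equality: since `{c | c = p ∨ B c p}` is a lower set for `B`, a linear extension of `B`
can list it first. Being a majority winner is antitone in the set of competitors, so the existential
over agendas is decided by this largest set, separately for each completion of the profile.
-/

theorem IsMajWinner.anti {α : Type*} {n : ℕ} {prof : Fin n → α → α → Prop} {S T : Finset α}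
    {a : α} (hST : S ⊆ T) (hT : IsMajWinner prof T a) : IsMajWinner prof S a := by
  have hcard : (Finset.univ.filter fun i => ∀ c ∈ T, c ≠ a → prof i a c).card ≤
      (Finset.univ.filter fun i => ∀ c ∈ S, c ≠ a → prof i a c).card :=
    Finset.card_le_card <| Finset.monotone_filter_right _ fun _ _ hi c hc => hi c (hST hc)
  exact hT.trans_le (Nat.mul_le_mul_left 2 hcard)

theorem idxOf_lt_idxOf_iff_of_sortedLT {α : Type*} [LinearOrder α] [BEq α] [LawfulBEq α]
    {l : List α} (hl : l.SortedLT) {x y : α} (hx : x ∈ l) (hy : y ∈ l) :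
    l.idxOf x < l.idxOf y ↔ x < y := by
  rw [← hl.getElem_lt_getElem_iff (hi := List.idxOf_lt_length_iff.2 hx)
    (hj := List.idxOf_lt_length_iff.2 hy), List.getElem_idxOf, List.getElem_idxOf]

section AgendaCompletes

variable {α : Type*} [DecidableEq α]

theorem AgendaCompletes.mono {L : List α} {B C : α → α → Prop} (hBC : ∀ x y, B x y → C x y)
    (hL : AgendaCompletes L C) : AgendaCompletes L B :=
  ⟨hL.1, hL.2.1, fun x y hxy => hL.2.2 x y (hBC x y hxy)⟩

theorem exists_agendaCompletes_of_injective [Finite α] {β : Type*} [LinearOrder β] {f : α → β}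
    (hf : Function.Injective f) : ∃ L : List α, AgendaCompletes L fun x y => f x < f y := by
  have : Fintype α := Fintype.ofFinite α
  let : LinearOrder α := LinearOrder.lift' f hf
  have hmem (a : α) : a ∈ (Finset.univ : Finset α).sort := (Finset.mem_sort _).2 (Finset.mem_univ a)
  exact ⟨Finset.univ.sort, Finset.sort_nodup _ _, hmem, fun x y hxy =>
    (idxOf_lt_idxOf_iff_of_sortedLT (Finset.sortedLT_sort _) (hmem x) (hmem y)).2 hxy⟩

theorem exists_agendaCompletes_lowerSet_first [Finite α] [PartialOrder α] {s : Set α}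
    (hs : IsLowerSet s) :
    ∃ L : List α, AgendaCompletes L (· < ·) ∧ ∀ x ∈ s, ∀ y ∉ s, L.idxOf x < L.idxOf y := by
  -- Ordered lexicographically, the first key puts `s` before its complement.
  let key (x : α) : Prop ×ₗ LinearExtension α := toLex (x ∉ s, toLinearExtension x)
  have key_injective : Function.Injective key := fun _ _ h => congrArg (fun k => (ofLex k).2) h
  have key_strictMono : StrictMono key := fun x y hxy => by
    have hle : (x ∉ s) ≤ (y ∉ s) := fun hx hy => hx (hs hxy.le hy)
    have hlt : toLinearExtension x < toLinearExtension y :=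
      (toLinearExtension.monotone hxy.le).lt_of_ne hxy.ne
    exact Prod.Lex.toLex_strictMono (Prod.mk_lt_mk_of_le_of_lt hle hlt)
  have key_lt {x y : α} (hx : x ∈ s) (hy : y ∉ s) : key x < key y :=
    Prod.Lex.toLex_lt_toLex.2 <| Or.inl <| lt_of_le_not_ge (fun h => (h hx).elim) fun h => h hy hx
  obtain ⟨L, hL⟩ := exists_agendaCompletes_of_injective key_injective
  exact ⟨L, hL.mono fun _ _ hxy => key_strictMono hxy,
    fun x hx y hy => hL.2.2 x y (key_lt hx hy)⟩

variable [Fintype α] {B : α → α → Prop}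

theorem AgendaCompletes.insert_succL_subset {L : List α} (hL : AgendaCompletes L B) (p : α) :
    insert p (SuccL L p) ⊆ Finset.univ \ PrecB B p := by
  intro c hc
  simp only [SuccL, PrecB, Finset.mem_insert, Finset.mem_sdiff, Finset.mem_filter, Finset.mem_univ,
    true_and] at hc ⊢
  intro hcp
  have hlt : L.idxOf c < L.idxOf p := hL.2.2 c p hcp
  obtain rfl | hpc := hc
  · exact hlt.false
  · exact hlt.asymm hpc

theorem exists_agendaCompletes_insert_succL_eq (hB : IsStrictOrder α B) (p : α) :
    ∃ L : List α, AgendaCompletes L B ∧ insert p (SuccL L p) = Finset.univ \ PrecB B p := by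
  let : PartialOrder α := partialOrderOfSO B
  obtain ⟨L, hL, hfirst⟩ := exists_agendaCompletes_lowerSet_first (isLowerSet_Iic p)
  refine ⟨L, hL, (AgendaCompletes.insert_succL_subset hL p).antisymm fun c hc => ?_⟩
  simp only [SuccL, PrecB, Finset.mem_insert, Finset.mem_sdiff, Finset.mem_filter, Finset.mem_univ,
    true_and] at hc ⊢
  exact or_iff_not_imp_left.2 fun hne =>
    hfirst p Set.self_mem_Iic c fun hle => hc (hle.lt_of_ne hne)

end AgendaCompletes

theorem stmt14_general {α : Type*} [Fintype α] [DecidableEq α] {n : ℕ}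
    (prof : Fin n → α → α → Prop) (B : α → α → Prop) (hB : IsStrictOrder α B) (p : α) :
    (∃ L : List α, AgendaCompletes L B ∧ ¬ IsMajWinner prof (insert p (SuccL L p)) p) ↔
      ¬ IsMajWinner prof (Finset.univ \ PrecB B p) p := by
  constructor
  · rintro ⟨L, hL, hp⟩
    exact fun h => hp (h.anti (hL.insert_succL_subset p))
  · intro hp
    obtain ⟨L, hL, heq⟩ := exists_agendaCompletes_insert_succL_eq hB p
    exact ⟨L, hL, heq ▸ hp⟩

/-- There are completions `comp` of the partial profile and `L` of the partial agenda
such that `p` is not a `(Succ_L(p) ∪ {p})`-majority winner iff there is a completion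
`comp` of the profile in which `p` is not an `(A ∖ Prec_B(p))`-majority winner. -/
theorem stmt14 {α : Type*} [Fintype α] [DecidableEq α] {n : ℕ}
    (prof : Fin n → α → α → Prop) (hpo : ∀ i, IsStrictOrder α (prof i))
    (B : α → α → Prop) (hB : IsStrictOrder α B) (p : α) :
    (∃ (comp : Fin n → α → α → Prop) (L : List α),
      Completes comp prof ∧ AgendaCompletes L B ∧
      ¬ IsMajWinner comp (insert p (SuccL L p)) p) ↔
    (∃ comp : Fin n → α → α → Prop, Completes comp prof ∧
      ¬ IsMajWinner comp (Finset.univ \ PrecB B p) p) := by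
  simp only [exists_and_left, stmt14_general _ B hB p]
end

section
/- Let P be a partial profile over a finite set A of alternatives, B a partial agenda over A, and p ∈ A. Suppose that in every completion P* of P, p is an (A ∖ Prec_B(p))-majority winner (equivalently, no completion of (P, B) makes p fail to be a majority winner of its agenda suffix). Then there exist a completion P* of P and a completion L of B such that some alternative c ∈ Prec_L(p) is a (Succ_L(c) ∪ {c})-majority winner in P* if and only if there exist an alternative c ∈ Prec_B(p) and a completion P* of P in which c is a (Succ_B(c) ∪ {c})-majority winner. -/
open scoped Classical

/-!
Two majorities share a voter, and that voter cannot rank two alternatives both ways. Hence an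
alternative `c` that is a majority winner of its agenda suffix in some completion of `B`, and
precedes `p` there, must precede `p` already in `B`: otherwise `c` and `p` would each be a majority
winner against the other. Every completion of `B` keeps `Succ_B(c)` after `c`, and a completion
that puts everything else before `c` realises exactly this set, so it is the most favourable
agenda for `c`.
-/

section MajorityWinner

variable {α : Type*} {n : ℕ} {prof : Fin n → α → α → Prop} {S T : Finset α} {a b : α}

lemma IsMajWinner.mono (h : IsMajWinner prof T a) (hST : S ⊆ T) : IsMajWinner prof S a := by
  have hvoters : (Finset.univ.filter fun i => ∀ c ∈ T, c ≠ a → prof i a c).card ≤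
      (Finset.univ.filter fun i => ∀ c ∈ S, c ≠ a → prof i a c).card :=
    Finset.card_le_card <| Finset.monotone_filter_right _ fun _ _ hi c hc => hi c (hST hc)
  exact h.trans_le (Nat.mul_le_mul_left 2 hvoters)

lemma IsMajWinner.exists_common_voter (ha : IsMajWinner prof S a) (hb : IsMajWinner prof T b) :
    ∃ i, (∀ c ∈ S, c ≠ a → prof i a c) ∧ ∀ c ∈ T, c ≠ b → prof i b c := by
  unfold IsMajWinner at ha hb
  obtain ⟨i, hi⟩ := Finset.inter_nonempty_of_card_lt_card_add_card
    (Finset.subset_univ (Finset.univ.filter fun i => ∀ c ∈ S, c ≠ a → prof i a c))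
    (Finset.subset_univ (Finset.univ.filter fun i => ∀ c ∈ T, c ≠ b → prof i b c))
    (by rw [Finset.card_fin]; omega)
  exact ⟨i, by simpa only [Finset.mem_inter, Finset.mem_filter_univ] using hi⟩

lemma IsMajWinner.eq_of_mem [∀ i, Std.Asymm (prof i)] (ha : IsMajWinner prof S a)
    (hb : IsMajWinner prof T b) (hbS : b ∈ S) (haT : a ∈ T) : a = b := by
  by_contra hab
  obtain ⟨i, hia, hib⟩ := ha.exists_common_voter hb
  exact asymm_of (prof i) (hia b hbS (Ne.symm hab)) (hib a haT hab)

end MajorityWinner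

lemma Completes.asymm {α : Type*} {n : ℕ} {comp prof : Fin n → α → α → Prop}
    (h : Completes comp prof) (i : Fin n) : Std.Asymm (comp i) :=
  have := (h i).1
  inferInstance

section PartialAgenda

variable {α : Type*} [Fintype α] {B : α → α → Prop} {c x : α}

@[simp] lemma mem_precB : x ∈ PrecB B c ↔ B x c := by simp only [PrecB, Finset.mem_filter_univ]

@[simp] lemma mem_succB : x ∈ SuccB B c ↔ B c x := by simp only [SuccB, Finset.mem_filter_univ]

end PartialAgenda

lemma isStrictOrder_or_notMem_and_mem {α : Type*} {B : α → α → Prop} [IsStrictOrder α B]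
    {U : Set α} (hU : ∀ x y, B x y → x ∈ U → y ∈ U) :
    IsStrictOrder α fun x y => B x y ∨ x ∉ U ∧ y ∈ U where
  irrefl x := by
    rintro (hxx | ⟨hx, hx'⟩)
    · exact irrefl_of B x hxx
    · exact hx hx'
  trans x y z := by
    rintro (hxy | ⟨hx, hy⟩) (hyz | ⟨hy', hz⟩)
    · exact Or.inl (trans_of B hxy hyz)
    · exact Or.inr ⟨fun hx => hy' (hU x y hxy hx), hz⟩
    · exact Or.inr ⟨hx, hU y z hyz hy⟩
    · exact absurd hy hy'

section Agenda

variable {α : Type*} [DecidableEq α] {B : α → α → Prop} {L : List α} {c x : α}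

@[simp] lemma mem_precL [Fintype α] : x ∈ PrecL L c ↔ L.idxOf x < L.idxOf c := by
  simp only [PrecL, Finset.mem_filter_univ]

@[simp] lemma mem_succL [Fintype α] : x ∈ SuccL L c ↔ L.idxOf c < L.idxOf x := by
  simp only [SuccL, Finset.mem_filter_univ]

lemma AgendaCompletes.precB_subset_precL [Fintype α] (hL : AgendaCompletes L B) (c : α) :
    PrecB B c ⊆ PrecL L c :=
  fun x hx => mem_precL.2 (hL.2.2 x c (mem_precB.1 hx))

lemma AgendaCompletes.succB_subset_succL [Fintype α] (hL : AgendaCompletes L B) (c : α) :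
    SuccB B c ⊆ SuccL L c :=
  fun x hx => mem_succL.2 (hL.2.2 c x (mem_succB.1 hx))

lemma agendaCompletes_of_pairwise_not [Std.Irrefl B] (hnodup : L.Nodup) (hmem : ∀ a, a ∈ L)
    (hL : L.Pairwise fun x y => ¬ B y x) : AgendaCompletes L B := by
  refine ⟨hnodup, hmem, fun x y hxy => ?_⟩
  have hne : L.idxOf x ≠ L.idxOf y := by
    rw [Ne, List.idxOf_inj (hmem x)]
    exact ne_of_irrefl hxy
  refine hne.lt_or_gt.resolve_right fun hyx => ?_
  have hnot := List.pairwise_iff_getElem.1 hL _ _ (List.idxOf_lt_length_of_mem (hmem y))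
    (List.idxOf_lt_length_of_mem (hmem x)) hyx
  rw [List.getElem_idxOf, List.getElem_idxOf] at hnot
  exact hnot hxy

lemma exists_agendaCompletes [Finite α] (B : α → α → Prop) [IsStrictOrder α B] :
    ∃ L : List α, AgendaCompletes L B := by
  have := Fintype.ofFinite α
  let _ : PartialOrder α := partialOrderOfSO B
  obtain ⟨s, _, hs⟩ := extend_partialOrder (α := α) (· ≤ ·)
  have hBs : ∀ x y, s x y → ¬ B y x := by
    intro x y hxy hyx
    have hlt : y < x := hyx
    exact hlt.ne (antisymm_of s (hs _ _ hlt.le) hxy)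
  exact ⟨Finset.univ.sort s, agendaCompletes_of_pairwise_not (Finset.sort_nodup _ _)
    (fun a => (Finset.mem_sort s).2 (Finset.mem_univ a))
    ((Finset.pairwise_sort _ s).imp fun {x y} => hBs x y)⟩

lemma exists_agendaCompletes_forall_idxOf_lt [Finite α] [IsStrictOrder α B] {U : Set α}
    (hU : ∀ x y, B x y → x ∈ U → y ∈ U) :
    ∃ L : List α, AgendaCompletes L B ∧ ∀ x ∉ U, ∀ y ∈ U, L.idxOf x < L.idxOf y := by
  have := isStrictOrder_or_notMem_and_mem hU
  obtain ⟨L, hnodup, hmem, hL⟩ := exists_agendaCompletes fun x y => B x y ∨ x ∉ U ∧ y ∈ U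
  exact ⟨L, ⟨hnodup, hmem, fun x y hxy => hL x y (Or.inl hxy)⟩,
    fun x hx y hy => hL x y (Or.inr ⟨hx, hy⟩)⟩

lemma exists_agendaCompletes_succL_eq_succB [Fintype α] (B : α → α → Prop) [IsStrictOrder α B]
    (c : α) : ∃ L : List α, AgendaCompletes L B ∧ SuccL L c = SuccB B c := by
  have hupper : ∀ x y, B x y → x ∈ {z | z = c ∨ B c z} → y ∈ {z | z = c ∨ B c z} := by
    rintro x y hxy (rfl | hcx)
    · exact Or.inr hxy
    · exact Or.inr (trans_of B hcx hxy)
  obtain ⟨L, hL, hlt⟩ := exists_agendaCompletes_forall_idxOf_lt hupper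
  refine ⟨L, hL, Finset.Subset.antisymm (fun x hx => ?_) (hL.succB_subset_succL c)⟩
  rw [mem_succL] at hx
  have hxmem : x = c ∨ B c x := by
    by_contra hxnot
    exact lt_asymm hx (hlt x hxnot c (Or.inl rfl))
  refine mem_succB.2 (hxmem.resolve_left ?_)
  rintro rfl
  exact lt_irrefl _ hx

end Agenda

section SuffixWinner

variable {α : Type*} [Fintype α] [DecidableEq α] {n : ℕ} {prof : Fin n → α → α → Prop}
  {B : α → α → Prop} {L : List α} {c p : α}

lemma IsMajWinner.mem_precB_of_mem_precL [∀ i, Std.Asymm (prof i)]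
    (hp : IsMajWinner prof (Finset.univ \ PrecB B p) p) (hcp : c ∈ PrecL L p)
    (hc : IsMajWinner prof (insert c (SuccL L c)) c) : c ∈ PrecB B p := by
  rw [mem_precL] at hcp
  by_contra hcB
  have heq : c = p := hc.eq_of_mem hp (Finset.mem_insert_of_mem (mem_succL.2 hcp))
    (Finset.mem_sdiff.2 ⟨Finset.mem_univ c, hcB⟩)
  exact hcp.ne (heq ▸ rfl)

lemma exists_agendaCompletes_isMajWinner_iff [∀ i, Std.Asymm (prof i)] [IsStrictOrder α B]
    (hp : IsMajWinner prof (Finset.univ \ PrecB B p) p) :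
    (∃ L : List α, AgendaCompletes L B ∧ c ∈ PrecL L p ∧
      IsMajWinner prof (insert c (SuccL L c)) c) ↔
    c ∈ PrecB B p ∧ IsMajWinner prof (insert c (SuccB B c)) c := by
  constructor
  · rintro ⟨L, hL, hcp, hc⟩
    exact ⟨hp.mem_precB_of_mem_precL hcp hc,
      hc.mono (Finset.insert_subset_insert c (hL.succB_subset_succL c))⟩
  · rintro ⟨hcp, hc⟩
    obtain ⟨L, hL, hsucc⟩ := exists_agendaCompletes_succL_eq_succB B c
    exact ⟨L, hL, hL.precB_subset_precL p hcp, hsucc.symm ▸ hc⟩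

theorem stmt15_general {profs : Set (Fin n → α → α → Prop)}
    (hasymm : ∀ prof ∈ profs, ∀ i, Std.Asymm (prof i)) [IsStrictOrder α B]
    (hmaj : ∀ prof ∈ profs, IsMajWinner prof (Finset.univ \ PrecB B p) p) :
    (∃ (prof : Fin n → α → α → Prop) (L : List α),
      prof ∈ profs ∧ AgendaCompletes L B ∧
      ∃ c ∈ PrecL L p, IsMajWinner prof (insert c (SuccL L c)) c) ↔
    ∃ c ∈ PrecB B p, ∃ prof ∈ profs, IsMajWinner prof (insert c (SuccB B c)) c := by
  have hfixed (prof) (hprof : prof ∈ profs) (c : α) :=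
    have := hasymm prof hprof
    exists_agendaCompletes_isMajWinner_iff (c := c) (hmaj prof hprof)
  constructor
  · rintro ⟨prof, L, hprof, hL, c, hcp, hc⟩
    obtain ⟨hcB, hcwin⟩ := (hfixed prof hprof c).1 ⟨L, hL, hcp, hc⟩
    exact ⟨c, hcB, prof, hprof, hcwin⟩
  · rintro ⟨c, hcB, prof, hprof, hc⟩
    obtain ⟨L, hL, hcp, hcwin⟩ := (hfixed prof hprof c).2 ⟨hcB, hc⟩
    exact ⟨prof, L, hprof, hL, c, hcp, hcwin⟩

end SuffixWinner

/-- Suppose that in every completion of the partial profile, `p` is an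
`(A ∖ Prec_B(p))`-majority winner. Then there are completions `comp` of the profile and
`L` of the partial agenda such that some `c ∈ Prec_L(p)` is a `(Succ_L(c) ∪ {c})`-majority
winner iff there are an alternative `c ∈ Prec_B(p)` and a completion `comp` of the profile
in which `c` is a `(Succ_B(c) ∪ {c})`-majority winner. -/
theorem stmt15 {α : Type*} [Fintype α] [DecidableEq α] {n : ℕ}
    (prof : Fin n → α → α → Prop) (hpo : ∀ i, IsStrictOrder α (prof i))
    (B : α → α → Prop) (hB : IsStrictOrder α B) (p : α)
    (hmaj : ∀ comp : Fin n → α → α → Prop, Completes comp prof →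
      IsMajWinner comp (Finset.univ \ PrecB B p) p) :
    (∃ (comp : Fin n → α → α → Prop) (L : List α),
      Completes comp prof ∧ AgendaCompletes L B ∧
      ∃ c ∈ PrecL L p, IsMajWinner comp (insert c (SuccL L c)) c) ↔
    (∃ c ∈ PrecB B p, ∃ comp : Fin n → α → α → Prop, Completes comp prof ∧
      IsMajWinner comp (insert c (SuccB B c)) c) := by
  exact stmt15_general (profs := {comp | Completes comp prof}) (fun _ hcomp => hcomp.asymm) hmaj
end
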